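/- Assume π̄(a) > 0 for every a ∈ A, and let S' = {p(·|a) : a ∈ A} be the revealed signal set with revealed attention function α'(s|x) = ∑_{a : p(·|a)=s} π(a|x). Then the revealed attention function is a garbling of the true attention function α: there exists a row-stochastic kernel γ : S → S' (γ(s'|s) ≥ 0, ∑_{s'∈S'} γ(s'|s) = 1 for every s ∈ S) such that α'(s'|x) = ∑_{s∈S} α(s|x)·γ(s'|s) for all x ∈ X and s' ∈ S'; explicitly, γ(s'|s) = ∑_{a : p(·|a)=s'} η(a|s) works. -/

import Mathlib

open Finset
open scoped Classical

/-- The induced signal probability `p(s) = ∑_x μ(x) α(s|x)`. -/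
noncomputable def sigProb {X S : Type*} [Fintype X]
    (μ : X → ℝ) (α : X → S → ℝ) (s : S) : ℝ :=
  ∑ x, μ x * α x s

/-- The induced action-selection policy `π(a|x) = ∑_s α(s|x) η(a|s)`. -/
noncomputable def policy {X S A : Type*} [Fintype S]
    (α : X → S → ℝ) (η : S → A → ℝ) (x : X) (a : A) : ℝ :=
  ∑ s, α x s * η s a

/-- The induced action probability `π̄(a) = ∑_x μ(x) π(a|x)`. -/
noncomputable def actProb {X S A : Type*} [Fintype X] [Fintype S]
    (μ : X → ℝ) (α : X → S → ℝ) (η : S → A → ℝ) (a : A) : ℝ :=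
  ∑ x, μ x * policy α η x a

/-- The revealed posterior `p(·|a)` as a function on `X`. -/
noncomputable def revPost {X S A : Type*} [Fintype X] [Fintype S]
    (μ : X → ℝ) (α : X → S → ℝ) (η : S → A → ℝ) (a : A) : X → ℝ :=
  fun x => μ x * policy α η x a / actProb μ α η a

/-- The revealed signal set `S' = {p(·|a) : a ∈ A}`. -/
noncomputable def revSignals {X S A : Type*} [Fintype X] [Fintype S] [Fintype A]
    (μ : X → ℝ) (α : X → S → ℝ) (η : S → A → ℝ) : Finset (X → ℝ) :=
  Finset.univ.image (revPost μ α η)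

/-- The revealed attention function `α'(s'|x) = ∑_{a : p(·|a) = s'} π(a|x)`. -/
noncomputable def revAtt {X S A : Type*} [Fintype X] [Fintype S] [Fintype A]
    (μ : X → ℝ) (α : X → S → ℝ) (η : S → A → ℝ) (s' : X → ℝ) (x : X) : ℝ :=
  ∑ a, if revPost μ α η a = s' then policy α η x a else 0

/-- The explicit garbling kernel `γ(s'|s) = ∑_{a : p(·|a) = s'} η(a|s)`. -/
noncomputable def garbling {X S A : Type*} [Fintype X] [Fintype S] [Fintype A]
    (μ : X → ℝ) (α : X → S → ℝ) (η : S → A → ℝ) (s : S) (s' : X → ℝ) : ℝ :=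
  ∑ a, if revPost μ α η a = s' then η s a else 0

/-- The revealed attention function is a garbling of the true attention function:
there is a row-stochastic kernel `γ` from `S` to the revealed signal set with
`α'(s'|x) = ∑_s α(s|x) γ(s'|s)`; explicitly `γ(s'|s) = ∑_{a : p(·|a)=s'} η(a|s)` works. -/
theorem revealed_attention_is_garbling
    {X S A : Type*} [Fintype X] [Fintype S] [Fintype A]
    (μ : X → ℝ) (hμpos : ∀ x, 0 < μ x) (hμsum : ∑ x, μ x = 1)
    (α : X → S → ℝ) (hαnn : ∀ x s, 0 ≤ α x s) (hαsum : ∀ x, ∑ s, α x s = 1)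
    (η : S → A → ℝ) (hηnn : ∀ s a, 0 ≤ η s a) (hηsum : ∀ s, ∑ a, η s a = 1)
    (hπbar : ∀ a, 0 < actProb μ α η a) :
    ∃ γ : S → (X → ℝ) → ℝ,
      (∀ s s', 0 ≤ γ s s') ∧
      (∀ s, ∑ s' ∈ revSignals μ α η, γ s s' = 1) ∧
      (∀ x s', s' ∈ revSignals μ α η →
        revAtt μ α η s' x = ∑ s, α x s * γ s s') ∧
      γ = garbling μ α η := by
  refine ⟨garbling μ α η, ?_, ?_, ?_, rfl⟩
  · intro s s'
    unfold garbling
    refine Finset.sum_nonneg fun a _ => ?_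
    split_ifs
    · exact hηnn s a
    · exact le_rfl
  · intro s
    unfold garbling
    rw [Finset.sum_comm, ← hηsum s]
    refine Finset.sum_congr rfl fun a _ => ?_
    rw [Finset.sum_ite_eq, if_pos]
    exact Finset.mem_image_of_mem _ (Finset.mem_univ a)
  · intro x s' _
    unfold revAtt garbling
    simp_rw [Finset.mul_sum]
    rw [Finset.sum_comm]
    refine Finset.sum_congr rfl fun a _ => ?_
    split_ifs
    · rfl
    · simp
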